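/- arXiv:0907.2515 — 2 statements merged into one kernel-verified Lean document; each statement's English description precedes it below -/
import Mathlib

section
/- Let m ≥ 1 be an integer. There exists T₀ > 0 such that for every t ≥ T₀ the following holds: if 4ζ(1/2+it)L₋₄(1/2+it) + F_{4m}(1/2+it) = 0 or 4ζ(1/2+it)L₋₄(1/2+it) − F_{4m}(1/2+it) = 0, then both ζ(1/2+it)L₋₄(1/2+it) = 0 and F_{4m}(1/2+it) = 0. (These two combinations are, up to a nonvanishing factor on the critical line, the rescaled sums C̃(2,2m;s) and S̃(2,2m;s); thus neither C̃(2,2m;·) nor S̃(2,2m;·) has a zero on the critical line in the asymptotic region which is not a common zero of both, and such common zeros are simultaneous zeros of 𝒞(0,1;·) and 𝒞(1,4m;·).) -/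
/-!
On the line `s = 1/2 + it` reflection `s ↦ 1 - s` is complex conjugation, so functional equations
become reality statements. The function `π^(-s) Γ(s) ζ(s) L₋₄(s)` is invariant under reflection
(`zetaL_fe`), and so is `π^(-s) Γ(s + 2m) F(s)` (`hecke_fe` and `hecke_eq_of_re_pos`); all of
`ζ`, `L₋₄`, `F` commute with conjugation, so both functions are real on the critical line. If
`F(s) = ±4 ζ(s) L₋₄(s) ≠ 0`, then the quotient `P(s) = Γ(s + 2m) / Γ(s) = s (s+1) ⋯ (s+2m-1)` of
the Gamma factors is real too, i.e. `P(s) = P(1 - s)`. As `P(s) - P(1 - s)` is a nonzero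
polynomial, this fails once `t` is large (`rising_not_real`).

The functional equation of `ζ L₋₄` follows from those of the two factors. That of `𝒞(1,4m;s)` is
Hecke's, by Mellin transform of the theta series `∑ₚ (p₁ + i p₂)^(4m) exp (-π |p|² t)`. The
modularity of this theta series (`thetaSum_fe`) comes from the one-variable Jacobi theta function:
`(2πi)ⁿ / n! · ∑ₚ (p₁ + i p₂)ⁿ exp (-π |p|² t)` is the `n`-th Taylor coefficient at `w = 0` of
`θ(w, it) θ(iw, it)`, and in the transformation law of this product the Gaussian factors cancel
since `w² + (iw)² = 0`.
-/

/-- The angle `θ_{p₁,p₂} = arg(p₁ + i p₂)` of a lattice point. -/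
noncomputable def latticeAngle (p : ℤ × ℤ) : ℝ :=
  Complex.arg ((p.1 : ℂ) + (p.2 : ℂ) * Complex.I)

/-- The angular lattice sum `𝒞(n,m;s)`. -/
noncomputable def latC (n m : ℕ) (s : ℂ) : ℂ :=
  ∑' p : {p : ℤ × ℤ // p ≠ 0},
    ((Real.cos ((m : ℝ) * latticeAngle p.1) : ℂ)) ^ n /
      (((p.1.1 : ℂ)) ^ 2 + ((p.1.2 : ℂ)) ^ 2) ^ s

/-- The angular lattice sum `𝒮(n,m;s)`. -/
noncomputable def latS (n m : ℕ) (s : ℂ) : ℂ :=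
  ∑' p : {p : ℤ × ℤ // p ≠ 0},
    ((Real.sin ((m : ℝ) * latticeAngle p.1) : ℂ)) ^ n /
      (((p.1.1 : ℂ)) ^ 2 + ((p.1.2 : ℂ)) ^ 2) ^ s

open Complex ComplexConjugate

/-! ### Identity principle and reflection symmetry -/

/-- Two entire functions that agree on the half-plane `1 < re s` are equal. -/
lemma eq_of_re_gt_one {f g : ℂ → ℂ} (hf : Differentiable ℂ f) (hg : Differentiable ℂ g)
    (h : ∀ s : ℂ, 1 < s.re → f s = g s) : f = g := by
  refine (hf.differentiableOn.analyticOnNhd isOpen_univ).eq_of_eventuallyEq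
    (hg.differentiableOn.analyticOnNhd isOpen_univ) (z₀ := 2) ?_
  filter_upwards [(isOpen_lt continuous_const continuous_re).mem_nhds
    (show (1 : ℝ) < (2 : ℂ).re by norm_num)] with s hs using h s hs

/-- For an entire function, the symmetry `f (conj s) = conj (f s)` need only be checked on the
half-plane `1 < re s`, where it can be read off from a Dirichlet series with real coefficients. -/
lemma conj_of_re_gt_one {f : ℂ → ℂ} (hf : Differentiable ℂ f)
    (h : ∀ s : ℂ, 1 < s.re → f (conj s) = conj (f s)) (s : ℂ) : f (conj s) = conj (f s) := by
  have hg : Differentiable ℂ (fun s => conj (f (conj s))) := fun s =>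
    (differentiableAt_conj_conj_iff.mpr (hf _))
  have := congrFun (eq_of_re_gt_one hg hf fun s hs => by rw [h s hs, conj_conj]) s
  rw [← this, conj_conj]

/-! ### The functional equation of `ζ L₋₄` -/

lemma chi_vals (χ : DirichletCharacter ℂ 4) (hχ : χ ≠ 1) :
    χ 0 = 0 ∧ χ 1 = 1 ∧ χ 2 = 0 ∧ χ 3 = -1 := by
  have h0 : χ 0 = 0 := χ.map_nonunit (by decide)
  have h2 : χ 2 = 0 := χ.map_nonunit (by decide)
  have h3 : χ 3 * χ 3 = 1 := by
    rw [← map_mul, show (3 : ZMod 4) * 3 = 1 from rfl, map_one]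
  refine ⟨h0, map_one χ, h2, (mul_self_eq_one_iff.mp h3).resolve_left fun h => hχ ?_⟩
  have key : ∀ a : ZMod 4, IsUnit a → χ a = 1 := by
    intro a ha
    have : a = 1 ∨ a = 3 := by revert a; decide
    rcases this with rfl | rfl
    · exact map_one χ
    · exact h
  ext u
  rw [key u u.isUnit, MulChar.one_apply u.isUnit]

/-- The nontrivial character mod 4 is primitive, because there are no nontrivial characters modulo
the proper divisors 1 and 2 of 4. -/
lemma chi_primitive (χ : DirichletCharacter ℂ 4) (hχ : χ ≠ 1) : χ.IsPrimitive := by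
  have hd : χ.conductor ∣ 4 := χ.conductor_dvd_level
  have hle : χ.conductor ≤ 4 := Nat.le_of_dvd (by norm_num) hd
  obtain ⟨h, χ₀, h'⟩ := χ.factorsThrough_conductor
  rw [DirichletCharacter.isPrimitive_def]
  have key : ∀ d : ℕ, (hd : d ∣ 4) → ∀ ψ : DirichletCharacter ℂ d, (∀ u : (ZMod d)ˣ, u = 1) →
      χ ≠ DirichletCharacter.changeLevel hd ψ := by
    intro d hd ψ hu hc
    apply hχ
    rw [hc]
    have : ψ = 1 := by
      ext u
      rw [hu u]; simp
    rw [this]; simp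
  generalize χ.conductor = d at *
  interval_cases d
  · simp at hd
  · exact absurd h' (key 1 h χ₀ (by decide))
  · exact absurd h' (key 2 h χ₀ (by decide))
  · omega
  · rfl

lemma chi_odd (χ : DirichletCharacter ℂ 4) (hχ : χ ≠ 1) : χ.Odd := by
  rw [DirichletCharacter.Odd, show (-1 : ZMod 4) = 3 from rfl, (chi_vals χ hχ).2.2.2]

lemma chi_conj (χ : DirichletCharacter ℂ 4) (hχ : χ ≠ 1) (a : ZMod 4) : conj (χ a) = χ a := by
  obtain ⟨h0, h1, h2, h3⟩ := chi_vals χ hχ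
  fin_cases a
  · exact (congrArg conj h0).trans ((map_zero _).trans h0.symm)
  · exact (congrArg conj h1).trans ((map_one _).trans h1.symm)
  · exact (congrArg conj h2).trans ((map_zero _).trans h2.symm)
  · exact (congrArg conj h3).trans ((by simp : conj (-1 : ℂ) = -1).trans h3.symm)

lemma chi_inv (χ : DirichletCharacter ℂ 4) (hχ : χ ≠ 1) : χ⁻¹ = χ := by
  refine MulChar.ext' fun a => ?_
  rw [MulChar.inv_apply_eq_inv']
  obtain ⟨h0, h1, h2, h3⟩ := chi_vals χ hχ
  fin_cases a
  · exact (congrArg _ h0).trans (inv_zero.trans h0.symm)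
  · exact (congrArg _ h1).trans (inv_one.trans h1.symm)
  · exact (congrArg _ h2).trans (inv_zero.trans h2.symm)
  · exact (congrArg _ h3).trans ((by norm_num : (-1 : ℂ)⁻¹ = -1).trans h3.symm)

/-- The root number is 1, because the Gauss sum is `i - (-i) = 2i`. -/
lemma chi_rootNumber (χ : DirichletCharacter ℂ 4) (hχ : χ ≠ 1) : χ.rootNumber = 1 := by
  obtain ⟨h0, h1, h2, h3⟩ := chi_vals χ hχ
  have e1 : ZMod.stdAddChar (1 : ZMod 4) = I := by
    have := ZMod.stdAddChar_coe (N := 4) 1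
    rw [Int.cast_one] at this
    rw [this, show 2 * (Real.pi : ℂ) * I * ((1 : ℤ) : ℂ) / ((4 : ℕ) : ℂ) = Real.pi / 2 * I by
      push_cast; ring, exp_pi_div_two_mul_I]
  have e3 : ZMod.stdAddChar (3 : ZMod 4) = -I := by
    rw [show (3 : ZMod 4) = 1 + 1 + 1 from rfl, AddChar.map_add_eq_mul, AddChar.map_add_eq_mul, e1]
    simp
  have hg : gaussSum χ ZMod.stdAddChar = 2 * I := by
    rw [gaussSum]
    have : ∀ f : ZMod 4 → ℂ, ∑ a, f a = f 0 + f 1 + f 2 + f 3 := fun f => Fin.sum_univ_four f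
    rw [this, h0, h1, h2, h3, e1, e3]
    ring
  have h4 : ((4 : ℕ) : ℂ) ^ (1 / 2 : ℂ) = 2 := by
    rw [show ((4 : ℕ) : ℂ) = (2 : ℂ) ^ (2 : ℕ) by norm_num, ← Complex.cpow_nat_mul']
    · norm_num
    · rw [← ofReal_ofNat, arg_ofReal_of_nonneg (by norm_num)]; simpa using Real.pi_pos
    · rw [← ofReal_ofNat, arg_ofReal_of_nonneg (by norm_num)]; simpa using Real.pi_pos.le
  rw [DirichletCharacter.rootNumber, hg, h4, if_neg (chi_odd χ hχ).not_even]
  field_simp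

lemma LFunction_conj (χ : DirichletCharacter ℂ 4) (hχ : χ ≠ 1) (s : ℂ) :
    χ.LFunction (conj s) = conj (χ.LFunction s) := by
  refine conj_of_re_gt_one (DirichletCharacter.differentiable_LFunction hχ) (fun s hs => ?_) s
  rw [DirichletCharacter.LFunction_eq_LSeries _ hs,
    DirichletCharacter.LFunction_eq_LSeries _ (by simpa using hs), LSeries, LSeries, conj_tsum]
  refine tsum_congr fun n => ?_
  rcases eq_or_ne n 0 with rfl | hn
  · simp
  rw [LSeries.term_of_ne_zero hn, LSeries.term_of_ne_zero hn, map_div₀, chi_conj χ hχ,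
    cpow_conj _ _ (by rw [natCast_arg]; exact Real.pi_ne_zero.symm), conj_natCast]


/-- The product of the completed functions of `ζ` and `L₋₄`, by the duplication formula
`Γ_ℝ(s) Γ_ℝ(s+1) = 2 (2π)^(-s) Γ(s)`. -/
lemma completed_mul (χ : DirichletCharacter ℂ 4) (hχ : χ ≠ 1) {s : ℂ} (h0 : 0 < s.re) :
    completedRiemannZeta s * χ.completedLFunction s =
      2 * (2 : ℂ) ^ (-s) *
        ((Real.pi : ℂ) ^ (-s) * Gamma s * (riemannZeta s * χ.LFunction s)) := by
  have hs : s ≠ 0 := by rintro rfl; simp at h0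
  have e1 : s.Gammaℝ ≠ 0 := Gammaℝ_ne_zero_of_re_pos h0
  have e2 : (s + 1).Gammaℝ ≠ 0 := Gammaℝ_ne_zero_of_re_pos (by simp; linarith)
  have h1 := riemannZeta_def_of_ne_zero hs
  have h2 := DirichletCharacter.LFunction_eq_completed_div_gammaFactor χ s (Or.inl hs)
  rw [(chi_odd χ hχ).gammaFactor_def, eq_div_iff e2] at h2
  rw [eq_div_iff e1] at h1
  have h3 : s.Gammaℝ * (s + 1).Gammaℝ = 2 * ((2 : ℂ) ^ (-s) * (Real.pi : ℂ) ^ (-s)) * Gamma s := by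
    rw [Gammaℝ_mul_Gammaℝ_add_one, Gammaℂ_def, ← ofReal_ofNat,
      mul_cpow_ofReal_nonneg (by norm_num) Real.pi_pos.le]
  rw [← h1, ← h2]
  linear_combination riemannZeta s * χ.LFunction s * h3

/-- The function `π^(-s) Γ(s) ζ(s) L₋₄(s)` is invariant under `s ↦ 1 - s`. -/
lemma zetaL_fe (χ : DirichletCharacter ℂ 4) (hχ : χ ≠ 1) {s : ℂ} (h0 : 0 < s.re) (h1 : s.re < 1) :
    (Real.pi : ℂ) ^ (-(1 - s)) * Gamma (1 - s) * (riemannZeta (1 - s) * χ.LFunction (1 - s)) =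
      (Real.pi : ℂ) ^ (-s) * Gamma s * (riemannZeta s * χ.LFunction s) := by
  have h := completed_mul χ hχ (s := 1 - s) (by simpa using h1)
  rw [completedRiemannZeta_one_sub, (chi_primitive χ hχ).completedLFunction_one_sub,
    chi_rootNumber χ hχ, chi_inv χ hχ, mul_one, mul_left_comm, completed_mul χ hχ h0] at h
  have h4 : ((4 : ℕ) : ℂ) ^ (s - 1 / 2) * (2 : ℂ) ^ (-s) = (2 : ℂ) ^ (-(1 - s)) := by
    rw [show ((4 : ℕ) : ℂ) = (2 : ℂ) ^ (2 : ℕ) by norm_num, ← Complex.cpow_nat_mul',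
      ← cpow_add _ _ two_ne_zero]
    · congr 1; push_cast; ring
    · rw [← ofReal_ofNat, arg_ofReal_of_nonneg (by norm_num)]; simpa using Real.pi_pos
    · rw [← ofReal_ofNat, arg_ofReal_of_nonneg (by norm_num)]; simpa using Real.pi_pos.le
  have h2 : (2 : ℂ) ^ (-(1 - s)) ≠ 0 := by simp [cpow_eq_zero_iff]
  rw [← h4] at h h2
  refine mul_left_cancel₀ (mul_ne_zero two_ne_zero h2) ?_
  linear_combination -h

/-! ### Theta series of the Gaussian integers with harmonic coefficients -/

lemma hasSum_congr_left {α β : Type*} [AddCommMonoid α] [TopologicalSpace α] {f g : β → α} {a : α}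
    (h : ∀ b, f b = g b) : HasSum f a ↔ HasSum g a := by
  rw [funext h]

/-- The lattice point `p` as the Gaussian integer `p₁ + i p₂`. -/
noncomputable def gaussPt (p : ℤ × ℤ) : ℂ := (p.1 : ℂ) + (p.2 : ℂ) * I

/-- The norm `p₁² + p₂²` of the Gaussian integer `p₁ + i p₂`, as a real number. -/
def latNorm (p : ℤ × ℤ) : ℝ := (p.1 : ℝ) ^ 2 + (p.2 : ℝ) ^ 2

lemma norm_gaussPt_sq (p : ℤ × ℤ) : ‖gaussPt p‖ ^ 2 = latNorm p := by
  rw [← normSq_eq_norm_sq, gaussPt, latNorm, normSq_apply]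
  simp; ring

lemma norm_gaussPt_le (p : ℤ × ℤ) : ‖gaussPt p‖ ≤ |(p.1 : ℝ)| + |(p.2 : ℝ)| := by
  refine (norm_add_le _ _).trans (le_of_eq ?_)
  simp

/-- The Gaussian weight absorbs exponential growth in `‖p‖`: the sum is dominated by a product of
two one-dimensional theta bounds, since `‖p₁ + i p₂‖ ≤ |p₁| + |p₂|`. -/
lemma summable_theta_exp {t : ℝ} (ht : 0 < t) (S : ℝ) (hS : 0 ≤ S) :
    Summable fun p : ℤ × ℤ =>
      Real.exp (-Real.pi * latNorm p * t) * Real.exp (2 * Real.pi * ‖gaussPt p‖ * S) := by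
  have hb := summable_pow_mul_jacobiTheta₂_term_bound S ht 0
  simp only [pow_zero, one_mul] at hb
  refine Summable.of_nonneg_of_le (fun p => by positivity) (fun p => ?_)
    (hb.mul_of_nonneg hb (fun _ => by positivity) (fun _ => by positivity))
  rw [← Real.exp_add, ← Real.exp_add, Real.exp_le_exp, latNorm]
  have := mul_le_mul_of_nonneg_left (norm_gaussPt_le p) (mul_nonneg Real.pi_pos.le hS)
  push_cast
  nlinarith

/-- Absolute convergence of the double series obtained by expanding `exp (2πi (p₁ + i p₂) w)` in
powers of `w`. It justifies interchanging the sum over the lattice with the power series. -/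
lemma summable_theta_master {t : ℝ} (ht : 0 < t) (w : ℂ) :
    Summable fun x : (ℤ × ℤ) × ℕ => (Real.exp (-Real.pi * latNorm x.1 * t) : ℂ) *
      ((2 * Real.pi * I * gaussPt x.1 * w) ^ x.2 / (x.2.factorial : ℂ)) := by
  refine Summable.of_norm ?_
  have hfib : ∀ p : ℤ × ℤ, HasSum (fun n : ℕ => ‖(Real.exp (-Real.pi * latNorm p * t) : ℂ) *
      ((2 * Real.pi * I * gaussPt p * w) ^ n / (n.factorial : ℂ))‖)
      (Real.exp (-Real.pi * latNorm p * t) * Real.exp (2 * Real.pi * ‖gaussPt p‖ * ‖w‖)) := by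
    intro p
    have := (NormedSpace.expSeries_div_hasSum_exp (2 * Real.pi * ‖gaussPt p‖ * ‖w‖)).mul_left
      (Real.exp (-Real.pi * latNorm p * t))
    rw [← Real.exp_eq_exp_ℝ] at this
    refine (hasSum_congr_left fun n => ?_).mpr this
    rw [norm_mul, norm_div, norm_pow, norm_real, Real.norm_of_nonneg (Real.exp_pos _).le]
    simp [abs_of_pos Real.pi_pos]
  rw [summable_prod_of_nonneg (fun _ => norm_nonneg _)]
  refine ⟨fun p => (hfib p).summable, ?_⟩
  simp_rw [fun p => (hfib p).tsum_eq]
  exact summable_theta_exp ht _ (norm_nonneg w)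

/-- The theta series `∑ₚ (p₁ + i p₂)ⁿ exp (-π |p|² t)`, meaningful for `t > 0`. -/
noncomputable def thetaSum (n : ℕ) (t : ℝ) : ℂ :=
  ∑' p : ℤ × ℤ, gaussPt p ^ n * Real.exp (-Real.pi * latNorm p * t)

lemma summable_thetaSum (n : ℕ) {t : ℝ} (ht : 0 < t) :
    Summable fun p : ℤ × ℤ => gaussPt p ^ n * (Real.exp (-Real.pi * latNorm p * t) : ℂ) := by
  have h := ((summable_theta_master ht 1).comp_injective
    (i := fun p : ℤ × ℤ => (p, n)) (fun a b hab => (Prod.ext_iff.mp hab).1)).mul_left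
    ((n.factorial : ℂ) / (2 * Real.pi * I) ^ n)
  refine h.congr fun p => ?_
  have h1 : (n.factorial : ℂ) ≠ 0 := by exact_mod_cast n.factorial_ne_zero
  have h2 : (2 * Real.pi * I : ℂ) ^ n ≠ 0 := pow_ne_zero _ (by simp [Real.pi_ne_zero])
  simp only [Function.comp, mul_one, mul_pow (2 * Real.pi * I : ℂ) (gaussPt p)]
  field_simp

/-- The product `θ(w, it) θ(iw, it)` of Jacobi theta functions is the two-dimensional theta series
with the character `exp (2πi (p₁ + i p₂) w)`, which is holomorphic in `w`. -/
lemma hasSum_jacobi {t : ℝ} (ht : 0 < t) (w : ℂ) :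
    HasSum (fun p : ℤ × ℤ => (Real.exp (-Real.pi * latNorm p * t) : ℂ) *
      cexp (2 * Real.pi * I * gaussPt p * w))
      (jacobiTheta₂ w (t * I) * jacobiTheta₂ (I * w) (t * I)) := by
  have hτ : 0 < (t * I : ℂ).im := by simpa using ht
  have e : ∀ p : ℤ × ℤ, (Real.exp (-Real.pi * latNorm p * t) : ℂ) *
      cexp (2 * Real.pi * I * gaussPt p * w) =
      jacobiTheta₂_term p.1 w (t * I) * jacobiTheta₂_term p.2 (I * w) (t * I) := by
    intro p
    rw [jacobiTheta₂_term, jacobiTheta₂_term, ofReal_exp, ← Complex.exp_add, ← Complex.exp_add,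
      gaussPt, latNorm]
    congr 1
    push_cast
    linear_combination (-(Real.pi : ℂ) * p.1 ^ 2 * t - Real.pi * p.2 ^ 2 * t) * I_sq
  have hs : Summable fun p : ℤ × ℤ => (Real.exp (-Real.pi * latNorm p * t) : ℂ) *
      cexp (2 * Real.pi * I * gaussPt p * w) := by
    refine Summable.of_norm_bounded (summable_theta_exp ht ‖w‖ (norm_nonneg w)) fun p => ?_
    rw [norm_mul, norm_real, Real.norm_of_nonneg (Real.exp_pos _).le, norm_exp]
    refine mul_le_mul_of_nonneg_left (Real.exp_le_exp.mpr ?_) (Real.exp_pos _).le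
    refine (re_le_norm _).trans (le_of_eq ?_)
    simp [abs_of_pos Real.pi_pos]
  have h := HasSum.mul (hasSum_jacobiTheta₂_term w hτ) (hasSum_jacobiTheta₂_term (I * w) hτ)
    (hs.congr e)
  exact (hasSum_congr_left e).mpr h

/-- The Taylor coefficients of `w ↦ θ(w, it) θ(iw, it)` at `0` are the theta series `thetaSum n t`,
up to the factor `(2πi)ⁿ / n!`. -/
lemma hasSum_jacobi_powers {t : ℝ} (ht : 0 < t) (w : ℂ) :
    HasSum (fun n : ℕ => w ^ n • ((2 * Real.pi * I) ^ n / (n.factorial : ℂ) * thetaSum n t))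
      (jacobiTheta₂ w (t * I) * jacobiTheta₂ (I * w) (t * I)) := by
  have hM := (summable_theta_master ht w)
  have h1 : HasSum (fun p : ℤ × ℤ => (Real.exp (-Real.pi * latNorm p * t) : ℂ) *
      cexp (2 * Real.pi * I * gaussPt p * w)) _ := hM.hasSum.prod_fiberwise fun p => by
    have := (NormedSpace.expSeries_div_hasSum_exp (2 * Real.pi * I * gaussPt p * w)).mul_left
      (Real.exp (-Real.pi * latNorm p * t) : ℂ)
    rwa [← Complex.exp_eq_exp_ℂ] at this
  rw [(hasSum_jacobi ht w).unique h1]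
  have h2 := (Equiv.prodComm ℕ (ℤ × ℤ)).hasSum_iff.mpr hM.hasSum
  refine h2.prod_fiberwise fun n => ?_
  have := (summable_thetaSum n ht).hasSum.mul_left
    (w ^ n • ((2 * Real.pi * I) ^ n / (n.factorial : ℂ)))
  rw [← smul_mul_assoc]
  refine (hasSum_congr_left fun p => ?_).mp this
  simp only [Function.comp, Equiv.prodComm_apply, Prod.swap_prod_mk, mul_pow, smul_eq_mul]
  ring

/-- Modularity of `thetaSum n`. In the functional equation of `θ(w, τ) θ(iw, τ)` the exponential
factors cancel because `w² + (iw)² = 0`; comparing Taylor coefficients in `w` gives the claim. -/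
lemma thetaSum_fe (n : ℕ) {t : ℝ} (ht : 0 < t) :
    thetaSum n t = (1 / t) * (1 / (t * I)) ^ n * thetaSum n (1 / t) := by
  have ht' : 0 < 1 / t := by positivity
  have htc : (t : ℂ) ≠ 0 := by exact_mod_cast ht.ne'
  let P : (ℕ → ℂ) → FormalMultilinearSeries ℂ ℂ ℂ := fun c => FormalMultilinearSeries.ofScalars ℂ c
  have h1 : HasFPowerSeriesAt (fun w => jacobiTheta₂ w (t * I) * jacobiTheta₂ (I * w) (t * I))
      (P fun n => (2 * Real.pi * I) ^ n / (n.factorial : ℂ) * thetaSum n t) 0 := by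
    rw [hasFPowerSeriesAt_iff]
    refine Filter.Eventually.of_forall fun w => ?_
    simp only [P, FormalMultilinearSeries.coeff_ofScalars, zero_add]
    exact hasSum_jacobi_powers ht w
  have h2 : HasFPowerSeriesAt (fun w => jacobiTheta₂ w (t * I) * jacobiTheta₂ (I * w) (t * I))
      (P fun n => (2 * Real.pi * I) ^ n / (n.factorial : ℂ) *
        ((1 / t) * (1 / (t * I)) ^ n * thetaSum n (1 / t))) 0 := by
    rw [hasFPowerSeriesAt_iff]
    refine Filter.Eventually.of_forall fun w => ?_
    simp only [P, FormalMultilinearSeries.coeff_ofScalars, zero_add]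
    have h := (hasSum_jacobi_powers ht' (w / (t * I))).mul_left (1 / t : ℂ)
    have hG : jacobiTheta₂ w (t * I) * jacobiTheta₂ (I * w) (t * I) = 1 / t *
        (jacobiTheta₂ (w / (t * I)) ((1 / t : ℝ) * I) *
          jacobiTheta₂ (I * (w / (t * I))) ((1 / t : ℝ) * I)) := by
      rw [jacobiTheta₂_functional_equation w, jacobiTheta₂_functional_equation (I * w)]
      have a1 : -1 / (t * I) = ((1 / t : ℝ) : ℂ) * I := by
        push_cast; field_simp; simp
      have a2 : -I * (t * I) = (t : ℂ) := by linear_combination (-t : ℂ) * I_sq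
      have a3 : (t : ℂ) ^ (1 / 2 : ℂ) * (t : ℂ) ^ (1 / 2 : ℂ) = t := by
        rw [← cpow_add _ _ htc]; norm_num
      have a4 : cexp (-Real.pi * I * w ^ 2 / (t * I)) *
          cexp (-Real.pi * I * (I * w) ^ 2 / (t * I)) = 1 := by
        rw [← Complex.exp_add, mul_pow, I_sq]
        rw [Complex.exp_eq_one_iff]
        exact ⟨0, by ring⟩
      rw [a1, a2, mul_div_assoc I w]
      have a5 : (1 : ℂ) / t = (1 / (t : ℂ) ^ (1 / 2 : ℂ)) * (1 / (t : ℂ) ^ (1 / 2 : ℂ)) := by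
        rw [div_mul_div_comm, a3, one_mul]
      rw [a5]
      linear_combination (1 / (t : ℂ) ^ (1 / 2 : ℂ)) * (1 / (t : ℂ) ^ (1 / 2 : ℂ)) *
        jacobiTheta₂ (w / (t * I)) ((1 / t : ℝ) * I) *
          jacobiTheta₂ (I * (w / (t * I))) ((1 / t : ℝ) * I) * a4
    rw [hG]
    refine (hasSum_congr_left fun n => ?_).mp h
    simp only [smul_eq_mul, div_eq_mul_inv, mul_pow, one_mul, inv_pow]
    ring
  have := congrArg (fun p => p.coeff n) (h1.eq_formalMultilinearSeries h2)
  simp only [P, FormalMultilinearSeries.coeff_ofScalars] at this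
  have hn : (2 * Real.pi * I) ^ n / (n.factorial : ℂ) ≠ 0 :=
    div_ne_zero (pow_ne_zero _ (by simp [Real.pi_ne_zero]))
      (by exact_mod_cast n.factorial_ne_zero)
  exact mul_left_cancel₀ hn this



/-! ### Decay, continuity and the Mellin transform -/

lemma latNorm_nonneg (p : ℤ × ℤ) : 0 ≤ latNorm p := by unfold latNorm; positivity

lemma one_le_latNorm {p : ℤ × ℤ} (hp : p ≠ 0) : 1 ≤ latNorm p := by
  have h : 1 ≤ p.1 ^ 2 + p.2 ^ 2 := by
    by_contra! h
    apply hp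
    have h1 : p.1 ^ 2 = 0 := by nlinarith [sq_nonneg p.1, sq_nonneg p.2]
    have h2 : p.2 ^ 2 = 0 := by nlinarith [sq_nonneg p.1, sq_nonneg p.2]
    exact Prod.ext (pow_eq_zero_iff two_ne_zero |>.mp h1) (pow_eq_zero_iff two_ne_zero |>.mp h2)
  unfold latNorm
  exact_mod_cast h

lemma gaussPt_zero : gaussPt 0 = 0 := by simp [gaussPt]

lemma norm_thetaSum_term (n : ℕ) (p : ℤ × ℤ) (t : ℝ) :
    ‖gaussPt p ^ n * (Real.exp (-Real.pi * latNorm p * t) : ℂ)‖ =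
      ‖gaussPt p‖ ^ n * Real.exp (-Real.pi * latNorm p * t) := by
  rw [norm_mul, norm_pow, norm_real, Real.norm_of_nonneg (Real.exp_pos _).le]

/-- Locally uniform convergence on `t > 0`. -/
lemma continuousOn_thetaSum (n : ℕ) : ContinuousOn (thetaSum n) (Set.Ioi 0) := by
  intro t ht
  have ht : 0 < t := ht
  have h : ContinuousOn (thetaSum n) (Set.Ici (t / 2)) := by
    refine continuousOn_tsum (fun p => ?_) (summable_thetaSum n (half_pos ht)).norm
      fun p x hx => ?_
    · fun_prop
    · rw [norm_thetaSum_term, norm_thetaSum_term]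
      have := mul_nonneg Real.pi_pos.le (latNorm_nonneg p)
      have hx : t / 2 ≤ x := hx
      gcongr ?_ * Real.exp ?_
      nlinarith
  exact ((h.continuousAt (Ici_mem_nhds (by linarith))).continuousWithinAt)

/-- Exponential decay of `thetaSum n`: for `n ≠ 0` the origin contributes nothing, and every other
lattice point has norm at least `1`. -/
lemma thetaSum_bound {n : ℕ} (hn : n ≠ 0) : ∃ C : ℝ, ∀ t : ℝ, 1 ≤ t →
    ‖thetaSum n t‖ ≤ C * Real.exp (-Real.pi * t) := by
  have hs := (summable_thetaSum n one_pos).norm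
  refine ⟨(∑' p : ℤ × ℤ, ‖gaussPt p ^ n * (Real.exp (-Real.pi * latNorm p * 1) : ℂ)‖) *
    Real.exp Real.pi, fun t ht => ?_⟩
  rw [mul_assoc, ← tsum_mul_right]
  refine tsum_of_norm_bounded (hs.mul_right _).hasSum fun p => ?_
  rw [norm_thetaSum_term, norm_thetaSum_term]
  rcases eq_or_ne p 0 with rfl | hp
  · simp [gaussPt_zero, hn]
  · rw [mul_assoc (_ ^ n), ← Real.exp_add, ← Real.exp_add]
    gcongr ?_ * Real.exp ?_
    have := mul_nonneg Real.pi_pos.le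
      (mul_nonneg (sub_nonneg.mpr (one_le_latNorm hp)) (sub_nonneg.mpr ht))
    nlinarith

/-- The real part of `thetaSum n`, i.e. the theta series with coefficients
`re ((p₁ + i p₂)ⁿ) = |p|ⁿ cos (n θ_p)`, regarded as a complex-valued function. -/
noncomputable def thetaRe (n : ℕ) (t : ℝ) : ℂ := ((thetaSum n t).re : ℂ)

lemma continuousOn_thetaRe (n : ℕ) : ContinuousOn (thetaRe n) (Set.Ioi 0) :=
  continuous_ofReal.comp_continuousOn (continuous_re.comp_continuousOn (continuousOn_thetaSum n))

lemma thetaRe_isBigO {n : ℕ} (hn : n ≠ 0) (r : ℝ) :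
    thetaRe n =O[Filter.atTop] fun t : ℝ => t ^ r := by
  obtain ⟨C, hC⟩ := thetaSum_bound hn
  refine Asymptotics.IsBigO.trans ?_ (isLittleO_exp_neg_mul_rpow_atTop Real.pi_pos r).isBigO
  refine Asymptotics.IsBigO.of_bound C ?_
  filter_upwards [Filter.eventually_ge_atTop 1] with t ht
  rw [Real.norm_of_nonneg (Real.exp_pos _).le, thetaRe, norm_real]
  exact (abs_re_le_norm _).trans (hC t ht)

/-- For exponents divisible by 4 the factor `iⁿ` is 1, so the modularity relation has real
coefficients and passes to real parts. -/
lemma thetaRe_fe (m : ℕ) {t : ℝ} (ht : 0 < t) :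
    thetaRe (4 * m) (1 / t) = ((t ^ ((4 * m + 1 : ℕ) : ℝ) : ℝ) : ℂ) * thetaRe (4 * m) t := by
  have htc : (t : ℂ) ≠ 0 := by exact_mod_cast ht.ne'
  have h := thetaSum_fe (4 * m) ht
  have hI : (t * I : ℂ) ^ (4 * m) = (t : ℂ) ^ (4 * m) := by
    rw [mul_pow, pow_mul I, I_pow_four, one_pow, mul_one]
  rw [one_div_pow, hI] at h
  have h' : thetaSum (4 * m) (1 / t) = ((t ^ (4 * m + 1) : ℝ) : ℂ) * thetaSum (4 * m) t := by
    rw [h]; push_cast; field_simp; ring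
  rw [thetaRe, thetaRe, h', re_ofReal_mul, Real.rpow_natCast, ofReal_mul]

/-- `thetaRe (4 * m)` paired with itself satisfies the hypotheses of the Mellin-transform principle,
with weight `4m + 1` and sign `1`. -/
noncomputable def thetaPair (m : ℕ) (hm : 1 ≤ m) : WeakFEPair ℂ where
  f := thetaRe (4 * m)
  g := thetaRe (4 * m)
  k := (4 * m + 1 : ℕ)
  ε := 1
  f₀ := 0
  g₀ := 0
  hf_int := (continuousOn_thetaRe _).locallyIntegrableOn measurableSet_Ioi
  hg_int := (continuousOn_thetaRe _).locallyIntegrableOn measurableSet_Ioi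
  hk := by positivity
  hε := one_ne_zero
  h_feq x hx := by rw [thetaRe_fe m hx, one_mul, smul_eq_mul]
  hf_top r := by simpa using thetaRe_isBigO (by omega) r
  hg_top r := by simpa using thetaRe_isBigO (by omega) r

lemma thetaPair_strong (m : ℕ) (hm : 1 ≤ m) : IsStrongFEPair (thetaPair m hm) := ⟨rfl, rfl⟩

/-- The Mellin transform of `thetaRe (4 * m)`; at `s + 2m` it is the completed form of
`𝒞(1,4m;s)`. -/
noncomputable def hecke (m : ℕ) : ℂ → ℂ := mellin (thetaRe (4 * m))

lemma differentiable_hecke (m : ℕ) (hm : 1 ≤ m) : Differentiable ℂ (hecke m) := by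
  have := (thetaPair_strong m hm).differentiable_Λ
  rwa [(thetaPair_strong m hm).Λ_eq] at this

lemma hecke_fe (m : ℕ) (hm : 1 ≤ m) (s : ℂ) :
    hecke m (1 - s + 2 * m) = hecke m (s + 2 * m) := by
  have h := (thetaPair m hm).functional_equation (s + 2 * m)
  rw [(thetaPair_strong m hm).symm_Λ_eq, (thetaPair_strong m hm).Λ_eq] at h
  simp only [thetaPair, one_smul] at h
  rw [hecke, ← h]
  congr 1
  push_cast; ring

/-- Convergence of `∑ₚ |p|^(-2σ)` for `σ > 1`. The origin contributes `1 / 0 ^ σ = 0`. -/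
lemma summable_latNorm {σ : ℝ} (hσ : 1 < σ) : Summable fun p : ℤ × ℤ => 1 / latNorm p ^ σ := by
  have h := EisensteinSeries.summable_one_div_norm_rpow (k := 2 * σ) (by linarith)
  rw [← (finTwoArrowEquiv ℤ).symm.summable_iff] at h
  refine Summable.of_nonneg_of_le (fun p => ?_) (fun p => ?_) h
  · have := latNorm_nonneg p; positivity
  · simp only [Function.comp]
    rcases eq_or_ne p 0 with rfl | hp
    · rw [latNorm]; simp [Real.zero_rpow (by linarith : σ ≠ 0)]
      positivity
    set x := (finTwoArrowEquiv ℤ).symm p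
    have hx : x ≠ 0 := by
      intro h0; apply hp
      have h1 : x 0 = 0 := by rw [h0]; rfl
      have h2 : x 1 = 0 := by rw [h0]; rfl
      exact Prod.ext h1 h2
    have hx0 : 0 < ‖x‖ := norm_pos_iff.mpr hx
    rw [Real.rpow_neg hx0.le, Real.rpow_mul hx0.le, ← one_div]
    refine one_div_le_one_div_of_le (by positivity) ?_
    refine Real.rpow_le_rpow (by positivity) ?_ (by linarith)
    rw [Real.rpow_two]
    have : ‖x‖ ≤ Real.sqrt (latNorm p) := by
      rw [pi_norm_le_iff_of_nonneg (Real.sqrt_nonneg _)]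
      intro i
      refine Real.le_sqrt_of_sq_le ?_
      rw [Int.norm_eq_abs, sq_abs, latNorm]
      fin_cases i
      · exact le_add_of_nonneg_right (sq_nonneg _)
      · exact le_add_of_nonneg_left (sq_nonneg _)
    calc ‖x‖ ^ 2 ≤ Real.sqrt (latNorm p) ^ 2 := by gcongr
      _ = latNorm p := Real.sq_sqrt (latNorm_nonneg p)

lemma gaussPt_pow_re (n : ℕ) (p : ℤ × ℤ) :
    (gaussPt p ^ n).re = ‖gaussPt p‖ ^ n * Real.cos (n * latticeAngle p) := by
  have h : gaussPt p ^ n = ((‖gaussPt p‖ ^ n : ℝ) : ℂ) *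
      cexp ((n * latticeAngle p : ℝ) * I) := by
    conv_lhs => rw [← norm_mul_exp_arg_mul_I (gaussPt p)]
    rw [mul_pow, ← Complex.exp_nat_mul, latticeAngle]
    push_cast
    rw [← gaussPt]
    ring_nf
  rw [h, re_ofReal_mul, exp_ofReal_mul_I_re]

/-- Integrating term by term, the completed form of `𝒞(1,4m;s)` is `hecke m (s + 2m)`. -/
lemma hecke_eq (m : ℕ) (hm : 1 ≤ m) {s : ℂ} (hs : 1 < s.re) :
    hecke m (s + 2 * m) =
      (Real.pi : ℂ) ^ (-(s + 2 * m)) * Gamma (s + 2 * m) * latC 1 (4 * m) s := by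
  have hn : 4 * m ≠ 0 := by omega
  have hre : (s + 2 * m).re = s.re + 2 * m := by simp
  have hM := hasSum_mellin_pi_mul (a := fun p : ℤ × ℤ => ((gaussPt p ^ (4 * m)).re : ℂ))
    (q := latNorm) (F := thetaRe (4 * m)) (s := s + 2 * m) (fun p => ?_) ?_ ?_ ?_
  · rw [hecke, ← hM.tsum_eq]
    simp_rw [mul_div_assoc]
    rw [tsum_mul_left]
    congr 1
    have h0 : ∀ p : ℤ × ℤ, p ≠ 0 →
        ((gaussPt p ^ (4 * m)).re : ℂ) / (latNorm p : ℂ) ^ (s + 2 * m) =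
        (Real.cos (((4 * m : ℕ) : ℝ) * latticeAngle p) : ℂ) ^ 1 /
          ((p.1 : ℂ) ^ 2 + (p.2 : ℂ) ^ 2) ^ s := by
      intro p hp
      have hq : (latNorm p : ℂ) ≠ 0 := by
        exact_mod_cast (lt_of_lt_of_le one_pos (one_le_latNorm hp)).ne'
      have h1 : ((p.1 : ℂ) ^ 2 + (p.2 : ℂ) ^ 2) = latNorm p := by rw [latNorm]; push_cast; rfl
      have h2 : ((‖gaussPt p‖ ^ (4 * m) : ℝ) : ℂ) = (latNorm p : ℂ) ^ (2 * m) := by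
        rw [← norm_gaussPt_sq]; push_cast; ring
      rw [h1, gaussPt_pow_re, ofReal_mul, h2, cpow_add _ _ hq, pow_one,
        show (2 * m : ℂ) = ((2 * m : ℕ) : ℂ) by push_cast; rfl, cpow_natCast]
      field_simp
    rw [latC, ← tsum_subtype_eq_of_support_subset (s := {p : ℤ × ℤ | p ≠ 0})]
    · exact tsum_congr fun p => h0 p.1 p.2
    · intro p hp
      rintro rfl
      simp [gaussPt_zero, hn] at hp
  · rcases eq_or_ne p 0 with rfl | hp
    · left; simp [gaussPt_zero, hn]
    · right; exact lt_of_lt_of_le one_pos (one_le_latNorm hp)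
  · rw [hre]; positivity
  · intro t ht
    have h := hasSum_ofReal.mpr (hasSum_re (summable_thetaSum (4 * m) ht).hasSum)
    refine (hasSum_congr_left fun p => ?_).mp h
    rw [re_mul_ofReal, ofReal_mul]
  · refine Summable.of_nonneg_of_le (fun p => ?_) (fun p => ?_) (summable_latNorm hs)
    · have := latNorm_nonneg p; positivity
    · rcases eq_or_ne p 0 with rfl | hp
      · have := latNorm_nonneg 0
        simp [gaussPt_zero, hn]
        positivity
      have hq := lt_of_lt_of_le one_pos (one_le_latNorm hp)
      have h3 : ‖((gaussPt p ^ (4 * m)).re : ℂ)‖ ≤ latNorm p ^ (2 * m : ℝ) := by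
        rw [norm_real]
        refine (abs_re_le_norm _).trans (le_of_eq ?_)
        rw [norm_pow, ← norm_gaussPt_sq, show (2 * m : ℝ) = ((2 * m : ℕ) : ℝ) by push_cast; rfl,
          Real.rpow_natCast, ← pow_mul]
        ring_nf
      rw [hre, Real.rpow_add hq, div_le_div_iff₀ (by positivity) (by positivity), one_mul, mul_comm]
      gcongr

lemma latC_conj (n m : ℕ) (s : ℂ) : latC n m (conj s) = conj (latC n m s) := by
  rw [latC, latC, conj_tsum]
  refine tsum_congr fun p => ?_
  have h : ((p.1.1 : ℂ) ^ 2 + (p.1.2 : ℂ) ^ 2) = (latNorm p.1 : ℂ) := by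
    rw [latNorm]; push_cast; rfl
  rw [h, map_div₀, map_pow, conj_ofReal, cpow_conj _ _ (by
    rw [arg_ofReal_of_nonneg (latNorm_nonneg _)]; exact Real.pi_ne_zero.symm), conj_ofReal]

/-- `hecke_eq` continued to `0 < re s`, which contains the critical line. -/
lemma hecke_eq_of_re_pos (m : ℕ) (hm : 1 ≤ m) {F : ℂ → ℂ} (hF : Differentiable ℂ F)
    (hFeq : ∀ s : ℂ, 1 < s.re → F s = latC 1 (4 * m) s) {s : ℂ} (hs : 0 < s.re) :
    hecke m (s + 2 * m) = (Real.pi : ℂ) ^ (-(s + 2 * m)) * Gamma (s + 2 * m) * F s := by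
  have hopen : IsOpen {s : ℂ | 0 < s.re} := isOpen_lt continuous_const continuous_re
  have hconv : IsPreconnected {s : ℂ | 0 < s.re} := (convex_halfSpace_re_gt 0).isPreconnected
  have h1 : AnalyticOnNhd ℂ (fun s : ℂ => hecke m (s + 2 * m)) {s : ℂ | 0 < s.re} :=
    ((differentiable_hecke m hm).comp
      (differentiable_id.add_const _)).differentiableOn.analyticOnNhd hopen
  have h2 : AnalyticOnNhd ℂ
      (fun s : ℂ => (Real.pi : ℂ) ^ (-(s + 2 * m)) * Gamma (s + 2 * m) * F s) {s : ℂ | 0 < s.re} := by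
    refine DifferentiableOn.analyticOnNhd (fun z hz => ?_) hopen
    have hz : 0 < z.re := hz
    refine DifferentiableAt.differentiableWithinAt ?_
    have hG : DifferentiableAt ℂ Gamma (z + 2 * m) := by
      refine differentiableAt_Gamma _ fun k hk => ?_
      have := congrArg re hk
      simp at this
      have h3 : (0 : ℝ) ≤ k := k.cast_nonneg
      have h4 : (0 : ℝ) ≤ m := m.cast_nonneg
      linarith
    have hG' : DifferentiableAt ℂ (fun s : ℂ => Gamma (s + 2 * m)) z :=
      hG.comp z (differentiableAt_id.add_const _)
    have hp : DifferentiableAt ℂ (fun s : ℂ => (Real.pi : ℂ) ^ (-(s + 2 * m))) z :=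
      DifferentiableAt.const_cpow (by fun_prop) (Or.inl (by simp [Real.pi_ne_zero]))
    exact (hp.mul hG').mul (hF z)
  refine h1.eqOn_of_preconnected_of_eventuallyEq h2 hconv (z₀ := 2) (by simp) ?_ hs
  filter_upwards [(isOpen_lt continuous_const continuous_re).mem_nhds
    (show (1 : ℝ) < (2 : ℂ).re by norm_num)] with s hs
  rw [hFeq s hs, hecke_eq m hm hs]

/-! ### Comparison of the Gamma factors on the critical line -/

lemma Gamma_add_nat (n : ℕ) {s : ℂ} (hs : 0 < s.re) :
    Gamma (s + n) = (∏ k ∈ Finset.range n, (s + k)) * Gamma s := by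
  induction n with
  | zero => simp
  | succ n ih =>
    have h : s + n ≠ 0 := by
      intro h
      have := congrArg re h
      simp at this
      have h3 : (0 : ℝ) ≤ n := n.cast_nonneg
      linarith
    rw [Finset.prod_range_succ, Nat.cast_succ, ← add_assoc, Gamma_add_one _ h, ih]
    ring

/-- The polynomial `P(s) = s (s+1) ⋯ (s+n-1)` satisfies `P(s) ≠ P(1 - s)` at all sufficiently high
points of the critical line, because `P(s) - P(1 - s)` is a nonzero polynomial: at `s = 1` it
equals `n!`. -/
lemma rising_not_real (n : ℕ) (hn : n ≠ 0) : ∃ T : ℝ, 0 < T ∧ ∀ t : ℝ, T ≤ t →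
    ∏ k ∈ Finset.range n, ((1 / 2 + t * I : ℂ) + k) ≠
      ∏ k ∈ Finset.range n, ((1 / 2 - t * I : ℂ) + k) := by
  let Q : Polynomial ℂ := ∏ k ∈ Finset.range n, (Polynomial.C (1 / 2 + k : ℂ) + Polynomial.X) -
    ∏ k ∈ Finset.range n, (Polynomial.C (1 / 2 + k : ℂ) - Polynomial.X)
  have hQe : ∀ z : ℂ, Q.eval z = ∏ k ∈ Finset.range n, ((1 / 2 + z : ℂ) + k) -
      ∏ k ∈ Finset.range n, ((1 / 2 - z : ℂ) + k) := by
    intro z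
    simp only [Q, Polynomial.eval_sub, Polynomial.eval_prod, Polynomial.eval_add,
      Polynomial.eval_C, Polynomial.eval_X]
    congr 1 <;> exact Finset.prod_congr rfl fun k _ => by ring
  have hQ : Q ≠ 0 := by
    intro h
    -- at `z = 1/2` the second product contains the factor `1/2 - z = 0`, the first is `n!`
    have h1 := hQe (1 / 2)
    rw [h, Polynomial.eval_zero, Finset.prod_eq_zero (f := fun k : ℕ => (1 / 2 - 1 / 2 : ℂ) + k)
      (Finset.mem_range.mpr (Nat.pos_of_ne_zero hn)) (by simp), sub_zero] at h1
    refine Finset.prod_ne_zero_iff.mpr (fun k _ => ?_) h1.symm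
    norm_num
    rw [add_comm]
    exact Nat.cast_add_one_ne_zero k
  obtain ⟨B, hB⟩ := (Polynomial.finite_setOfPred_isRoot hQ).isBounded.exists_norm_le
  refine ⟨max B 0 + 1, by positivity, fun t ht h => ?_⟩
  have hr : Q.IsRoot (t * I) := by rw [Polynomial.IsRoot, hQe, h, sub_self]
  have := hB _ hr
  have h1 := le_max_left B 0
  have h2 := le_max_right B 0
  simp at this
  have := le_abs_self t
  linarith

/-- For `m ≥ 1`, there is `T₀ > 0` such that for `t ≥ T₀`, any zero of
`4ζL₋₄ + F_{4m}` or of `4ζL₋₄ - F_{4m}` at `1/2 + i t` is a common zero of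
`ζ·L₋₄` and `F_{4m}` (where `F_{4m}` is the entire continuation of `𝒞(1,4m;·)`
and `L₋₄` is the L-function of the nontrivial Dirichlet character mod 4). -/
theorem no_separate_zeros_of_rescaled_sums (m : ℕ) (hm : 1 ≤ m)
    (χ : DirichletCharacter ℂ 4) (hχ : χ ≠ 1)
    (F : ℂ → ℂ) (hF : Differentiable ℂ F)
    (hFeq : ∀ s : ℂ, 1 < s.re → F s = latC 1 (4 * m) s) :
    ∃ T₀ : ℝ, 0 < T₀ ∧ ∀ t : ℝ, T₀ ≤ t →
      (4 * riemannZeta (1 / 2 + t * Complex.I) * χ.LFunction (1 / 2 + t * Complex.I)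
          + F (1 / 2 + t * Complex.I) = 0 ∨
        4 * riemannZeta (1 / 2 + t * Complex.I) * χ.LFunction (1 / 2 + t * Complex.I)
          - F (1 / 2 + t * Complex.I) = 0) →
      riemannZeta (1 / 2 + t * Complex.I) * χ.LFunction (1 / 2 + t * Complex.I) = 0 ∧
        F (1 / 2 + t * Complex.I) = 0 := by
  obtain ⟨T, hT, hP⟩ := rising_not_real (2 * m) (by omega)
  refine ⟨T, hT, fun t ht h => ?_⟩
  have hne := hP t ht
  set s : ℂ := 1 / 2 + t * I with hs
  have hsre : s.re = 1 / 2 := by simp [hs]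
  have hconj : conj s = 1 - s := by
    rw [hs]; simp only [map_add, map_mul, conj_ofReal, conj_I, map_div₀, map_one, map_ofNat]; ring
  have hs' : (1 / 2 - t * I : ℂ) = 1 - s := by rw [hs]; ring
  have hs0 : 0 < s.re := by rw [hsre]; norm_num
  have hs1 : 0 < (1 - s).re := by rw [sub_re, hsre]; norm_num
  rw [hs'] at hne
  have hFc : F (1 - s) = conj (F s) := by
    rw [← hconj]
    refine conj_of_re_gt_one hF (fun z hz => ?_) s
    rw [hFeq z hz, hFeq _ (by simpa using hz), latC_conj]
  have hZc : riemannZeta (1 - s) * χ.LFunction (1 - s) =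
      conj (riemannZeta s * χ.LFunction s) := by
    rw [← hconj, riemannZeta_conj, LFunction_conj χ hχ, map_mul]
  have hA := zetaL_fe χ hχ hs0 (by rw [hsre]; norm_num)
  have hB := hecke_fe m hm s
  rw [hecke_eq_of_re_pos m hm hF hFeq hs0, hecke_eq_of_re_pos m hm hF hFeq hs1] at hB
  rw [show (2 * m : ℂ) = ((2 * m : ℕ) : ℂ) by push_cast; rfl, Gamma_add_nat _ hs0,
    Gamma_add_nat _ hs1] at hB
  have hpi : (Real.pi : ℂ) ≠ 0 := by simp [Real.pi_ne_zero]
  rw [neg_add, neg_add, cpow_add _ _ hpi, cpow_add _ _ hpi] at hB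
  rw [hZc] at hA
  rw [hFc] at hB
  have hc : (Real.pi : ℂ) ^ (-((2 * m : ℕ) : ℂ)) ≠ 0 := by simp [cpow_eq_zero_iff, hpi]
  have hp1 : (Real.pi : ℂ) ^ (-(1 - s)) ≠ 0 := by simp [cpow_eq_zero_iff, hpi]
  have hG1 : Gamma (1 - s) ≠ 0 := Gamma_ne_zero_of_re_pos hs1
  have hF0 : F s = 0 := by
    by_contra hF0
    have hFc0 : conj (F s) ≠ 0 := (map_ne_zero _).mpr hF0
    -- `F s` is `4 ζ(s) L₋₄(s)` up to sign, so it inherits the reality of `π^(-s) Γ(s) ζ(s) L₋₄(s)`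
    have key : (Real.pi : ℂ) ^ (-(1 - s)) * Gamma (1 - s) * conj (F s) =
        (Real.pi : ℂ) ^ (-s) * Gamma s * F s := by
      rcases h with h | h
      · have e : F s = -4 * (riemannZeta s * χ.LFunction s) := by linear_combination h
        have e' : conj (F s) = -4 * conj (riemannZeta s * χ.LFunction s) := by
          rw [e, map_mul, map_neg, map_ofNat]
        rw [e', e]; linear_combination -4 * hA
      · have e : F s = 4 * (riemannZeta s * χ.LFunction s) := by linear_combination -h
        have e' : conj (F s) = 4 * conj (riemannZeta s * χ.LFunction s) := by
          rw [e, map_mul, map_ofNat]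
        rw [e', e]; linear_combination 4 * hA
    -- dividing the two functional equations leaves `P(s) = P(1 - s)` for the rising factorial `P`
    apply hne
    have hX : (Real.pi : ℂ) ^ (-((2 * m : ℕ) : ℂ)) *
        ((Real.pi : ℂ) ^ (-(1 - s)) * Gamma (1 - s) * conj (F s)) ≠ 0 :=
      mul_ne_zero hc (mul_ne_zero (mul_ne_zero hp1 hG1) hFc0)
    refine mul_left_cancel₀ hX ?_
    linear_combination ((Real.pi : ℂ) ^ (-((2 * m : ℕ) : ℂ)) *
      ∏ k ∈ Finset.range (2 * m), (s + k)) * key - hB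
  refine ⟨?_, hF0⟩
  rw [hF0] at h
  rcases h with h | h
  · linear_combination h / 4
  · linear_combination h / 4
end

section
/- Let l, m ≥ 1 be integers with l ≠ m, and let α_l, α_m be nonzero real numbers. There exists T₀ > 0 such that for every t ≥ T₀: if α_l·F_{4l}(1/2+it) + α_m·F_{4m}(1/2+it) = 0, then F_{4l}(1/2+it) = 0 and F_{4m}(1/2+it) = 0. -/
/-! ### Summability over the lattice -/

/-- The lattice point `p`, viewed as the Gaussian integer `p₁ + i p₂`. -/
noncomputable def latZ (p : ℤ × ℤ) : ℂ := (p.1 : ℂ) + (p.2 : ℂ) * Complex.I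

/-- The quadratic form `p₁² + p₂²`. -/
noncomputable def latQ (p : ℤ × ℤ) : ℝ := (p.1 : ℝ) ^ 2 + (p.2 : ℝ) ^ 2

lemma latQ_nonneg (p : ℤ × ℤ) : 0 ≤ latQ p := by unfold latQ; positivity

lemma norm_latZ_sq (p : ℤ × ℤ) : ‖latZ p‖ ^ 2 = latQ p := by
  rw [← Complex.normSq_eq_norm_sq, latZ, latQ]
  simp [Complex.normSq_apply]
  ring

lemma norm_latZ_le (p : ℤ × ℤ) : ‖latZ p‖ ≤ |(p.1 : ℝ)| + |(p.2 : ℝ)| := by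
  refine (norm_add_le _ _).trans ?_
  simp

lemma one_le_latQ {p : ℤ × ℤ} (hp : p ≠ 0) : 1 ≤ latQ p := by
  have h : (1 : ℤ) ≤ p.1 ^ 2 + p.2 ^ 2 := by
    by_contra! h
    have h1 : p.1 ^ 2 = 0 := by nlinarith [sq_nonneg p.1, sq_nonneg p.2]
    have h2 : p.2 ^ 2 = 0 := by nlinarith [sq_nonneg p.1, sq_nonneg p.2]
    exact hp (Prod.ext (by simpa using h1) (by simpa using h2))
  unfold latQ
  exact_mod_cast h

lemma summable_exp_lattice (S : ℝ) {T : ℝ} (hT : 0 < T) :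
    Summable fun p : ℤ × ℤ ↦
      Real.exp (S * (|(p.1 : ℝ)| + |(p.2 : ℝ)|)) * Real.exp (-Real.pi * latQ p * T) := by
  have h := summable_pow_mul_jacobiTheta₂_term_bound (S / (2 * Real.pi)) hT 0
  simp only [pow_zero, one_mul] at h
  refine (h.mul_of_nonneg h (fun _ ↦ (Real.exp_pos _).le) (fun _ ↦ (Real.exp_pos _).le)).congr
    fun p ↦ ?_
  rw [← Real.exp_add, ← Real.exp_add]
  congr 1
  have := Real.pi_ne_zero
  rw [latQ]
  push_cast
  field_simp
  ring

lemma summable_pow_lattice (k : ℕ) {T : ℝ} (hT : 0 < T) :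
    Summable fun p : ℤ × ℤ ↦ ‖latZ p‖ ^ k * Real.exp (-Real.pi * latQ p * T) := by
  refine ((summable_exp_lattice 1 hT).mul_left (k.factorial : ℝ)).of_nonneg_of_le
    (fun p ↦ by positivity) fun p ↦ ?_
  rw [← mul_assoc]
  gcongr
  have h1 := Real.pow_div_factorial_le_exp (‖latZ p‖) (norm_nonneg _) k
  rw [div_le_iff₀ (by positivity)] at h1
  refine h1.trans ?_
  rw [mul_comm]
  gcongr
  rw [one_mul]
  exact norm_latZ_le p

/-- Convergence of the Epstein-type series, reduced to the sup-norm version. -/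
lemma summable_latQ_rpow {σ : ℝ} (hσ : 1 < σ) :
    Summable fun p : ℤ × ℤ ↦ latQ p ^ (-σ) := by
  have h := (finTwoArrowEquiv ℤ).symm.summable_iff.mpr
    (EisensteinSeries.summable_one_div_norm_rpow (k := 2 * σ) (by linarith))
  refine h.of_nonneg_of_le (fun p ↦ Real.rpow_nonneg (latQ_nonneg p) _) fun p ↦ ?_
  rcases eq_or_ne p 0 with rfl | hp
  · rw [show latQ 0 = 0 by simp [latQ], Real.zero_rpow (by linarith)]
    exact Real.rpow_nonneg (norm_nonneg _) _
  set v : Fin 2 → ℤ := (finTwoArrowEquiv ℤ).symm p with hv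
  have hv0 : v ≠ 0 := by
    intro h0
    apply hp
    have h1 := congrFun h0 0
    have h2 := congrFun h0 1
    simp [hv] at h1 h2
    exact Prod.ext h1 h2
  have hpos : 0 < ‖v‖ := norm_pos_iff.mpr hv0
  have hle : ‖v‖ ^ 2 ≤ latQ p := by
    have hq : ‖v‖ ≤ √(latQ p) := by
      rw [pi_norm_le_iff_of_nonneg (Real.sqrt_nonneg _)]
      intro i
      apply Real.le_sqrt_of_sq_le
      fin_cases i <;> simp [hv, latQ, Int.norm_eq_abs] <;> positivity
    calc ‖v‖ ^ 2 ≤ √(latQ p) ^ 2 := by gcongr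
      _ = latQ p := Real.sq_sqrt (latQ_nonneg p)
  simp only [Function.comp_apply, ← hv]
  rw [show -(2 * σ) = 2 * (-σ) by ring, Real.rpow_mul (norm_nonneg _), Real.rpow_two]
  exact Real.rpow_le_rpow_of_nonpos (by positivity) hle (by linarith)

/-! ### Theta series with harmonic polynomial coefficients -/

/-- The theta series `∑ (p₁ + i p₂)ⁿ exp (-π (p₁² + p₂²) x)`. -/
noncomputable def latTheta (n : ℕ) (x : ℝ) : ℂ :=
  ∑' p : ℤ × ℤ, latZ p ^ n * (Real.exp (-Real.pi * latQ p * x) : ℂ)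

lemma hasSum_latTheta (n : ℕ) {x : ℝ} (hx : 0 < x) :
    HasSum (fun p : ℤ × ℤ ↦ latZ p ^ n * (Real.exp (-Real.pi * latQ p * x) : ℂ))
      (latTheta n x) := by
  refine Summable.hasSum (Summable.of_norm ((summable_pow_lattice n hx).congr fun p ↦ ?_))
  rw [norm_mul, norm_pow, Complex.norm_real, Real.norm_of_nonneg (Real.exp_pos _).le]

open Complex in
lemma hasSum_generating_row (w : ℂ) (x : ℝ) (p : ℤ × ℤ) :
    HasSum (fun n : ℕ ↦ (2 * Real.pi * I * w) ^ n / (n.factorial : ℂ) *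
      (latZ p ^ n * (Real.exp (-Real.pi * latQ p * x) : ℂ)))
      (jacobiTheta₂_term p.1 w (I * x) * jacobiTheta₂_term p.2 (I * w) (I * x)) := by
  have h := (NormedSpace.expSeries_div_hasSum_exp (2 * Real.pi * I * w * latZ p)).mul_right
    (Real.exp (-Real.pi * latQ p * x) : ℂ)
  rw [← Complex.exp_eq_exp_ℂ] at h
  have h0 : cexp (2 * Real.pi * I * w * latZ p) * (Real.exp (-Real.pi * latQ p * x) : ℂ) =
      jacobiTheta₂_term p.1 w (I * x) * jacobiTheta₂_term p.2 (I * w) (I * x) := by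
    rw [jacobiTheta₂_term, jacobiTheta₂_term, ← Complex.exp_add, Complex.ofReal_exp,
      ← Complex.exp_add]
    congr 1
    simp only [latZ, latQ]
    push_cast
    linear_combination (-(Real.pi : ℂ) * x * (p.1 ^ 2 + p.2 ^ 2)) * I_sq
  rw [← h0]
  refine h.congr_fun fun n ↦ ?_
  rw [mul_pow]
  ring

open Complex in
lemma summable_generating (w : ℂ) {x : ℝ} (hx : 0 < x) :
    Summable fun y : (ℤ × ℤ) × ℕ ↦ (2 * Real.pi * I * w) ^ y.2 / (y.2.factorial : ℂ) *
      (latZ y.1 ^ y.2 * (Real.exp (-Real.pi * latQ y.1 * x) : ℂ)) := by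
  have hn (p : ℤ × ℤ) (n : ℕ) : ‖(2 * Real.pi * I * w) ^ n / (n.factorial : ℂ) *
      (latZ p ^ n * (Real.exp (-Real.pi * latQ p * x) : ℂ))‖ =
      (2 * Real.pi * ‖w‖ * ‖latZ p‖) ^ n / n.factorial *
      Real.exp (-Real.pi * latQ p * x) := by
    rw [norm_mul, norm_div, norm_mul, norm_pow, norm_pow, Complex.norm_real,
      Real.norm_of_nonneg (Real.exp_pos _).le]
    simp only [norm_mul, Complex.norm_ofNat, Complex.norm_real, Real.norm_eq_abs,
      abs_of_pos Real.pi_pos, norm_I, mul_one, Complex.norm_natCast, mul_pow]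
    ring
  have hexp (p : ℤ × ℤ) : HasSum (fun n : ℕ ↦ (2 * Real.pi * ‖w‖ * ‖latZ p‖) ^ n / n.factorial *
      Real.exp (-Real.pi * latQ p * x))
      (Real.exp (2 * Real.pi * ‖w‖ * ‖latZ p‖) * Real.exp (-Real.pi * latQ p * x)) := by
    refine HasSum.mul_right _ ?_
    rw [Real.exp_eq_exp_ℝ]
    exact NormedSpace.expSeries_div_hasSum_exp _
  refine Summable.of_norm ((summable_prod_of_nonneg fun _ ↦ norm_nonneg _).mpr ⟨fun p ↦ ?_, ?_⟩)
  · simp only [hn]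
    exact (hexp p).summable
  · simp only [hn, fun p ↦ (hexp p).tsum_eq]
    refine (summable_exp_lattice (2 * Real.pi * ‖w‖) hx).of_nonneg_of_le
      (fun p ↦ by positivity) fun p ↦ ?_
    gcongr
    exact norm_latZ_le p

open Complex in
/-- A summand of the double series expanding a product of two theta functions in powers of `w`. -/
noncomputable def genTerm (w : ℂ) (x : ℝ) (p : ℤ × ℤ) (n : ℕ) : ℂ :=
  (2 * Real.pi * I * w) ^ n / (n.factorial : ℂ) *
    (latZ p ^ n * (Real.exp (-Real.pi * latQ p * x) : ℂ))

open Complex in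
/-- Evaluating the two-variable theta function at `w` and `i w` produces the generating
function of the series `latTheta n`. -/
lemma hasSum_generating (w : ℂ) {x : ℝ} (hx : 0 < x) :
    HasSum (fun n : ℕ ↦ (2 * Real.pi * I * w) ^ n / (n.factorial : ℂ) * latTheta n x)
      (jacobiTheta₂ w (I * x) * jacobiTheta₂ (I * w) (I * x)) := by
  have him : 0 < (I * (x : ℂ)).im := by simpa using hx
  have hsum : Summable fun y : (ℤ × ℤ) × ℕ ↦ genTerm w x y.1 y.2 := summable_generating w hx
  have hrow (p : ℤ × ℤ) : HasSum (fun n ↦ genTerm w x p n)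
      (jacobiTheta₂_term p.1 w (I * x) * jacobiTheta₂_term p.2 (I * w) (I * x)) :=
    hasSum_generating_row w x p
  have hcol (n : ℕ) : HasSum (fun p ↦ genTerm w x p n)
      ((2 * Real.pi * I * w) ^ n / (n.factorial : ℂ) * latTheta n x) :=
    (hasSum_latTheta n hx).mul_left _
  have h1 := hsum.hasSum.prod_fiberwise hrow
  have h2 := (hasSum_jacobiTheta₂_term w him).mul_eq (hasSum_jacobiTheta₂_term (I * w) him) h1
  have h3 : HasSum (fun y : ℕ × (ℤ × ℤ) ↦ genTerm w x y.2 y.1)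
      (∑' y : (ℤ × ℤ) × ℕ, genTerm w x y.1 y.2) :=
    (Equiv.prodComm ℕ (ℤ × ℤ)).hasSum_iff.mpr hsum.hasSum
  rw [h2]
  exact h3.prod_fiberwise hcol

lemma coeff_unique {a b : ℕ → ℂ} {f : ℂ → ℂ} (ha : ∀ w, HasSum (fun n ↦ w ^ n * a n) (f w))
    (hb : ∀ w, HasSum (fun n ↦ w ^ n * b n) (f w)) : a = b := by
  have key (c : ℕ → ℂ) (hc : ∀ w, HasSum (fun n ↦ w ^ n * c n) (f w)) :
      HasFPowerSeriesAt f (FormalMultilinearSeries.ofScalars ℂ c) 0 := by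
    rw [hasFPowerSeriesAt_iff]
    refine Filter.Eventually.of_forall fun w ↦ ?_
    simpa [FormalMultilinearSeries.coeff_ofScalars] using hc w
  have h := (key a ha).eq_formalMultilinearSeries (key b hb)
  funext n
  simpa [FormalMultilinearSeries.coeff_ofScalars] using
    congrArg (fun p : FormalMultilinearSeries ℂ ℂ ℂ ↦ p.coeff n) h

open Complex in
/-- The Gaussian factors of the two theta functions cancel because `w² + (i w)² = 0`. -/
lemma theta_prod_functional (w : ℂ) {x : ℝ} (hx : 0 < x) :
    jacobiTheta₂ w (I * x) * jacobiTheta₂ (I * w) (I * x) =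
      1 / x * (jacobiTheta₂ (w / (I * x)) (I * (1 / x : ℝ)) *
        jacobiTheta₂ (I * (w / (I * x))) (I * (1 / x : ℝ))) := by
  have hx' : (x : ℂ) ≠ 0 := ofReal_ne_zero.mpr hx.ne'
  have e1 : -I * (I * (x : ℂ)) = x := by linear_combination -(x : ℂ) * I_sq
  have e2 : -1 / (I * (x : ℂ)) = I * (1 / x : ℝ) := by
    push_cast
    field_simp
    linear_combination -I_sq
  have e3 : I * w / (I * (x : ℂ)) = I * (w / (I * x)) := by ring
  have e4 : (x : ℂ) ^ (1 / 2 : ℂ) * (x : ℂ) ^ (1 / 2 : ℂ) = x := by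
    rw [← cpow_add _ _ hx']
    norm_num
  have e5 : cexp (-Real.pi * I * w ^ 2 / (I * x)) * cexp (-Real.pi * I * (I * w) ^ 2 / (I * x))
      = 1 := by
    rw [← Complex.exp_add, mul_pow, I_sq]
    convert Complex.exp_zero using 2
    ring
  rw [jacobiTheta₂_functional_equation w, jacobiTheta₂_functional_equation (I * w), e1, e2, e3]
  set A := jacobiTheta₂ (w / (I * x)) (I * (1 / x : ℝ))
  set B := jacobiTheta₂ (I * (w / (I * x))) (I * (1 / x : ℝ))
  calc _ = 1 / ((x : ℂ) ^ (1 / 2 : ℂ) * (x : ℂ) ^ (1 / 2 : ℂ)) *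
        (cexp (-Real.pi * I * w ^ 2 / (I * x)) * cexp (-Real.pi * I * (I * w) ^ 2 / (I * x))) *
        (A * B) := by ring
    _ = _ := by rw [e4, e5, mul_one]

open Complex in
lemma latTheta_functional (n : ℕ) {x : ℝ} (hx : 0 < x) :
    latTheta n (1 / x) = x * (I * x) ^ n * latTheta n x := by
  have hx' : (x : ℂ) ≠ 0 := ofReal_ne_zero.mpr hx.ne'
  have ha (w : ℂ) := hasSum_generating w hx
  have hb (w : ℂ) := (hasSum_generating (w / (I * x)) (one_div_pos.mpr hx)).mul_left (1 / (x : ℂ))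
  simp_rw [← theta_prod_functional _ hx] at hb
  have h := congrFun (coeff_unique
    (a := fun n ↦ (2 * Real.pi * I) ^ n / (n.factorial : ℂ) * latTheta n x)
    (b := fun n ↦ 1 / x * ((2 * Real.pi * I) ^ n / (I * x) ^ n / (n.factorial : ℂ) *
      latTheta n (1 / x)))
    (fun w ↦ (ha w).congr_fun fun n ↦ by rw [mul_pow _ w]; ring)
    (fun w ↦ (hb w).congr_fun fun n ↦ by rw [mul_pow _ (w / _), div_pow w]; ring)) n
  have hpi : (Real.pi : ℂ) ≠ 0 := ofReal_ne_zero.mpr Real.pi_ne_zero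
  have hf : (n.factorial : ℂ) ≠ 0 := Nat.cast_ne_zero.mpr n.factorial_ne_zero
  have hp : (2 * Real.pi * I : ℂ) ^ n ≠ 0 := pow_ne_zero _ (by simp [hpi])
  have hI : (I * x : ℂ) ^ n ≠ 0 := pow_ne_zero _ (by simp [hx'])
  generalize (2 * Real.pi * I : ℂ) ^ n = A at *
  generalize (I * x : ℂ) ^ n = B at *
  field_simp at h
  linear_combination -h

/-! ### The Mellin transform of the theta series -/

lemma latTheta_continuousOn (n : ℕ) : ContinuousOn (latTheta n) (Set.Ioi 0) := by
  intro x hx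
  have hx' : (0 : ℝ) < x / 2 := half_pos hx
  have h : ContinuousOn (latTheta n) (Set.Ioi (x / 2)) := by
    refine continuousOn_tsum (u := fun p ↦ ‖latZ p‖ ^ n * Real.exp (-Real.pi * latQ p * (x / 2)))
      (fun p ↦ by fun_prop) (summable_pow_lattice n hx') fun p y hy ↦ ?_
    rw [norm_mul, norm_pow, Complex.norm_real, Real.norm_of_nonneg (Real.exp_pos _).le]
    have hq : 0 ≤ Real.pi * latQ p := mul_nonneg Real.pi_pos.le (latQ_nonneg p)
    gcongr ?_ * Real.exp ?_
    have hy' : x / 2 ≤ y := le_of_lt hy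
    nlinarith
  exact (h.continuousAt (Ioi_mem_nhds (half_lt_self hx))).continuousWithinAt

/-- Since `n ≠ 0`, the origin does not contribute, and all other lattice points satisfy
`p₁² + p₂² ≥ 1`. -/
lemma latTheta_bound {n : ℕ} (hn : n ≠ 0) :
    ∃ C : ℝ, ∀ x : ℝ, 1 ≤ x → ‖latTheta n x‖ ≤ C * Real.exp (-Real.pi * x) := by
  have hs := (summable_pow_lattice n one_pos).mul_left (Real.exp Real.pi)
  refine ⟨_, fun x hx ↦ tsum_of_norm_bounded (hs.hasSum.mul_right _) fun p ↦ ?_⟩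
  rw [norm_mul, norm_pow, Complex.norm_real, Real.norm_of_nonneg (Real.exp_pos _).le]
  rcases eq_or_ne p 0 with rfl | hp
  · simp [latZ, hn]
  · have e : Real.exp Real.pi * (‖latZ p‖ ^ n * Real.exp (-Real.pi * latQ p * 1)) *
        Real.exp (-Real.pi * x) = ‖latZ p‖ ^ n *
          Real.exp (Real.pi + -Real.pi * latQ p * 1 + -Real.pi * x) := by
      rw [Real.exp_add, Real.exp_add]
      ring
    rw [e]
    gcongr ?_ * Real.exp ?_
    have h1 := one_le_latQ hp
    nlinarith [Real.pi_pos, mul_nonneg (mul_nonneg Real.pi_pos.le (sub_nonneg.mpr h1))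
      (sub_nonneg.mpr hx)]

/-- The theta series with coefficients `Re (p₁ + i p₂)^(4m)`, regarded as complex-valued. -/
noncomputable def latKer (m : ℕ) (x : ℝ) : ℂ := ((latTheta (4 * m) x).re : ℂ)

lemma hasSum_latKer (m : ℕ) {x : ℝ} (hx : 0 < x) :
    HasSum (fun p : ℤ × ℤ ↦ (((latZ p ^ (4 * m)).re : ℝ) : ℂ) *
      (Real.exp (-Real.pi * latQ p * x) : ℂ)) (latKer m x) := by
  have h := Complex.hasSum_ofReal.mpr (Complex.hasSum_re (hasSum_latTheta (4 * m) hx))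
  refine h.congr_fun fun p ↦ ?_
  rw [Complex.re_mul_ofReal, Complex.ofReal_mul]

lemma latKer_functional (m : ℕ) {x : ℝ} (hx : 0 < x) :
    latKer m (1 / x) = ((x ^ (4 * m + 1 : ℝ) : ℝ) : ℂ) * latKer m x := by
  have h := latTheta_functional (4 * m) hx
  have e : (x : ℂ) * (Complex.I * x) ^ (4 * m) = ((x ^ (4 * m + 1) : ℝ) : ℂ) := by
    rw [mul_pow, pow_mul Complex.I, Complex.I_pow_four, one_pow]
    push_cast
    ring
  rw [e] at h
  rw [latKer, h, Complex.re_ofReal_mul, latKer, Complex.ofReal_mul]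
  rw [← Real.rpow_natCast]
  push_cast
  rfl

lemma latKer_isBigO {m : ℕ} (hm : 1 ≤ m) (r : ℝ) :
    latKer m =O[Filter.atTop] (fun x : ℝ ↦ x ^ r) := by
  obtain ⟨C, hC⟩ := latTheta_bound (n := 4 * m) (by lia)
  refine Asymptotics.IsBigO.trans (Asymptotics.IsBigO.of_bound C ?_)
    (isLittleO_exp_neg_mul_rpow_atTop Real.pi_pos r).isBigO
  filter_upwards [Filter.eventually_ge_atTop 1] with x hx
  rw [Real.norm_of_nonneg (Real.exp_pos _).le, latKer, Complex.norm_real]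
  exact (Complex.abs_re_le_norm _).trans (hC x hx)

lemma latKer_locallyIntegrable (m : ℕ) :
    MeasureTheory.LocallyIntegrableOn (latKer m) (Set.Ioi 0) := by
  refine ContinuousOn.locallyIntegrableOn ?_ measurableSet_Ioi
  exact Complex.continuous_ofReal.comp_continuousOn
    (Complex.continuous_re.comp_continuousOn (latTheta_continuousOn _))

/-- The self-dual pair, of weight `4m + 1` and root number `1`, formed by `latKer m`. -/
noncomputable def latPair {m : ℕ} (hm : 1 ≤ m) : WeakFEPair ℂ where
  f := latKer m
  g := latKer m
  k := 4 * m + 1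
  ε := 1
  f₀ := 0
  g₀ := 0
  hf_int := latKer_locallyIntegrable m
  hg_int := latKer_locallyIntegrable m
  hk := by positivity
  hε := one_ne_zero
  h_feq x hx := by rw [one_mul, smul_eq_mul]; exact latKer_functional m hx
  hf_top r := by simpa using latKer_isBigO hm r
  hg_top r := by simpa using latKer_isBigO hm r

lemma latPair_strong {m : ℕ} (hm : 1 ≤ m) : IsStrongFEPair (latPair hm) := ⟨rfl, rfl⟩

lemma latPair_Λ {m : ℕ} (hm : 1 ≤ m) (s : ℂ) : (latPair hm).Λ s = mellin (latKer m) s :=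
  ((latPair_strong hm).hasMellin s).2.symm

lemma differentiable_mellin_latKer {m : ℕ} (hm : 1 ≤ m) :
    Differentiable ℂ (mellin (latKer m)) := by
  rw [← funext (latPair_Λ hm)]
  exact (latPair_strong hm).differentiable_Λ

lemma mellin_latKer_functional {m : ℕ} (hm : 1 ≤ m) (s : ℂ) :
    mellin (latKer m) (4 * m + 1 - s) = mellin (latKer m) s := by
  have h := (latPair hm).functional_equation s
  have h2 := ((latPair_strong hm).symm.hasMellin s).2
  rw [latPair_Λ, ← h2] at h
  simpa only [latPair, WeakFEPair.symm, one_smul, Complex.ofReal_add, Complex.ofReal_mul,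
    Complex.ofReal_ofNat, Complex.ofReal_natCast, Complex.ofReal_one] using h

open ComplexConjugate in
lemma mellin_latKer_conj (m : ℕ) (s : ℂ) :
    mellin (latKer m) (conj s) = conj (mellin (latKer m) s) := by
  rw [mellin, mellin, ← integral_conj]
  refine MeasureTheory.setIntegral_congr_fun measurableSet_Ioi fun x hx ↦ ?_
  have hx0 : (0 : ℝ) < x := hx
  have harg : (x : ℂ).arg ≠ Real.pi := by
    rw [Complex.arg_ofReal_of_nonneg hx0.le]
    exact Real.pi_ne_zero.symm
  simp only [smul_eq_mul, map_mul, latKer, Complex.conj_ofReal]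
  congr 1
  rw [show conj s - 1 = conj (s - 1) by simp, Complex.cpow_conj _ _ harg, Complex.conj_ofReal]

/-- On the critical line the completed function is real: conjugation and the functional
equation both exchange `1/2 + it` and `1/2 - it`. -/
lemma mellin_latKer_real {m : ℕ} (hm : 1 ≤ m) (t : ℝ) :
    ∃ L : ℝ, mellin (latKer m) (1 / 2 + t * Complex.I + 2 * m) = L := by
  refine (Complex.conj_eq_iff_real.mp ?_)
  rw [← mellin_latKer_conj, ← mellin_latKer_functional hm]
  congr 1
  simp only [map_add, map_mul, map_div₀, map_one, map_ofNat, map_natCast, Complex.conj_ofReal,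
    Complex.conj_I]
  ring

lemma latZ_pow_re (n : ℕ) (p : ℤ × ℤ) :
    (latZ p ^ n).re = ‖latZ p‖ ^ n * Real.cos (n * latticeAngle p) := by
  rw [← Complex.norm_mul_exp_arg_mul_I (latZ p), mul_pow, ← Complex.exp_nat_mul,
    ← Complex.ofReal_pow, Complex.re_ofReal_mul]
  rw [show (n : ℂ) * ((latZ p).arg * Complex.I) = ((n * (latZ p).arg : ℝ) : ℂ) * Complex.I by
    push_cast; ring, Complex.exp_ofReal_mul_I_re]
  simp [latticeAngle, latZ]

lemma mellin_latKer_eq {m : ℕ} (hm : 1 ≤ m) {s : ℂ} (hs : 1 < s.re) :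
    mellin (latKer m) (s + 2 * m) =
      Real.pi ^ (-(s + 2 * m)) * Complex.Gamma (s + 2 * m) * latC 1 (4 * m) s := by
  have hre : (s + 2 * m).re = s.re + 2 * m := by simp
  have h0 : (latZ 0 ^ (4 * m)).re = 0 := by
    rw [show latZ 0 = 0 by simp [latZ], zero_pow (by lia), Complex.zero_re]
  have h := hasSum_mellin_pi_mul (a := fun p : ℤ × ℤ ↦ (((latZ p ^ (4 * m)).re : ℝ) : ℂ))
    (q := latQ) (F := latKer m) (s := s + 2 * m) (fun p ↦ ?_) (by rw [hre]; positivity)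
    (fun x hx ↦ hasSum_latKer m hx) ?_
  · rw [← h.tsum_eq, latC, ← tsum_mul_left]
    rw [← tsum_subtype_eq_of_support_subset (s := {p : ℤ × ℤ | p ≠ 0})]
    · refine tsum_congr fun p ↦ ?_
      have hp : p.1 ≠ 0 := p.2
      have hq : 0 < latQ p.1 := one_pos.trans_le (one_le_latQ hp)
      have hq' : (latQ p.1 : ℂ) ≠ 0 := Complex.ofReal_ne_zero.mpr hq.ne'
      have hqe : (p.1.1 : ℂ) ^ 2 + (p.1.2 : ℂ) ^ 2 = (latQ p.1 : ℂ) := by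
        simp [latQ]
      have hn : ‖latZ p.1‖ ^ (4 * m) = latQ p.1 ^ (2 * m) := by
        rw [← norm_latZ_sq, ← pow_mul]
        congr 1
        ring
      rw [hqe, latZ_pow_re, hn, pow_one, Complex.cpow_add _ _ hq',
        show (2 * m : ℂ) = ((2 * m : ℕ) : ℂ) by push_cast; rfl, Complex.cpow_natCast]
      have : (latQ p.1 : ℂ) ^ (2 * m) ≠ 0 := pow_ne_zero _ hq'
      have : (latQ p.1 : ℂ) ^ s ≠ 0 := by simp [Complex.cpow_eq_zero_iff, hq']
      push_cast
      field_simp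
    · intro p hp
      contrapose! hp
      have : p = 0 := by simpa using hp
      simp [this, h0]
  · rcases eq_or_ne p 0 with rfl | hp
    · exact Or.inl (by rw [h0, Complex.ofReal_zero])
    · exact Or.inr (one_pos.trans_le (one_le_latQ hp))
  · refine (summable_latQ_rpow hs).of_nonneg_of_le
      (fun p ↦ div_nonneg (norm_nonneg _) (Real.rpow_nonneg (latQ_nonneg p) _)) fun p ↦ ?_
    rcases eq_or_ne p 0 with rfl | hp
    · rw [h0, Complex.ofReal_zero, norm_zero, zero_div]
      exact Real.rpow_nonneg (latQ_nonneg _) _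
    have hq : 0 < latQ p := one_pos.trans_le (one_le_latQ hp)
    rw [hre, div_le_iff₀ (Real.rpow_pos_of_pos hq _), ← Real.rpow_add hq, neg_add_cancel_left,
      Complex.norm_real]
    refine (Complex.abs_re_le_norm _).trans (le_of_eq ?_)
    rw [norm_pow, show 4 * m = 2 * (2 * m) by ring, pow_mul, norm_latZ_sq]
    exact_mod_cast (Real.rpow_natCast (latQ p) (2 * m)).symm

/-- The continuation of the lattice sum, expressed through the Mellin transform. -/
lemma continuation_eq {m : ℕ} (hm : 1 ≤ m) {F : ℂ → ℂ} (hF : Differentiable ℂ F)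
    (hFeq : ∀ s : ℂ, 1 < s.re → F s = latC 1 (4 * m) s) (s : ℂ) :
    F s = Real.pi ^ (s + 2 * m) * (Complex.Gamma (s + 2 * m))⁻¹ *
      mellin (latKer m) (s + 2 * m) := by
  have hpi : (Real.pi : ℂ) ≠ 0 := Complex.ofReal_ne_zero.mpr Real.pi_ne_zero
  have hG : Differentiable ℂ fun s : ℂ ↦ (Real.pi : ℂ) ^ (s + 2 * m) *
      (Complex.Gamma (s + 2 * m))⁻¹ * mellin (latKer m) (s + 2 * m) := by
    have h1 : Differentiable ℂ fun s : ℂ ↦ s + 2 * m := by fun_prop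
    refine ((h1.const_cpow (Or.inl hpi)).mul
      (Complex.differentiable_one_div_Gamma.comp h1)).mul
      ((differentiable_mellin_latKer hm).comp h1)
  have hopen : ∀ᶠ z in nhds (2 : ℂ), 1 < z.re :=
    (isOpen_lt continuous_const Complex.continuous_re).mem_nhds (by simp)
  refine congrFun (AnalyticOnNhd.eq_of_eventuallyEq (z₀ := 2)
    (fun z _ ↦ hF.analyticAt z) (fun z _ ↦ hG.analyticAt z) ?_) s
  filter_upwards [hopen] with z hz
  have hΓ : Complex.Gamma (z + 2 * m) ≠ 0 :=
    Complex.Gamma_ne_zero_of_re_pos (by simp; positivity)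
  have hp : (Real.pi : ℂ) ^ (z + 2 * m) ≠ 0 := by simp [Complex.cpow_eq_zero_iff, hpi]
  rw [hFeq z hz, mellin_latKer_eq hm hz, Complex.cpow_neg]
  field_simp

/-! ### Quotients of Gamma values on a vertical line -/

open ComplexConjugate in
/-- For `a, N > 0` the polynomial `Γ(z + N) / Γ(z)` is real at only finitely many points of the
line `Re z = a`: otherwise it would be invariant under `a + u ↦ a - u`, but it vanishes at `0`
and not at `2a`. -/
lemma gamma_quotient_not_real {a : ℝ} (ha : 0 < a) {N : ℕ} (hN : N ≠ 0) :
    ∃ T : ℝ, 0 < T ∧ ∀ t : ℝ, T ≤ t →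
      (Complex.Gamma (a + t * Complex.I + N) / Complex.Gamma (a + t * Complex.I)).im ≠ 0 := by
  have hgam (z : ℂ) (hz : 0 < z.re) :
      Complex.Gamma (z + N) / Complex.Gamma z = (ascPochhammer ℂ N).eval z := by
    refine Complex.Gamma_add_nat_div_Gamma_eq z fun k hk ↦ ?_
    rw [hk] at hz
    simp at hz
    linarith [(Nat.cast_nonneg k : (0 : ℝ) ≤ k)]
  let R : Polynomial ℂ := (ascPochhammer ℂ N).comp (Polynomial.C (a : ℂ) + Polynomial.X) -
    (ascPochhammer ℂ N).comp (Polynomial.C (a : ℂ) - Polynomial.X)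
  have hR : R ≠ 0 := by
    intro h0
    have h := congrArg (Polynomial.eval (a : ℂ)) h0
    have hre : 0 < ((a : ℂ) + a).re := by simpa using ha
    simp only [R, Polynomial.eval_sub, Polynomial.eval_comp, Polynomial.eval_add,
      Polynomial.eval_C, Polynomial.eval_X, sub_self, ascPochhammer_ne_zero_eval_zero _ hN,
      sub_zero, Polynomial.eval_zero, ← hgam _ hre] at h
    refine div_ne_zero (Complex.Gamma_ne_zero_of_re_pos ?_)
      (Complex.Gamma_ne_zero_of_re_pos hre) h
    rw [Complex.add_re, Complex.natCast_re]
    positivity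
  have hfin : {t : ℝ | R.IsRoot (t * Complex.I)}.Finite := by
    refine (Polynomial.finite_setOfPred_isRoot hR).preimage (f := fun t : ℝ ↦ (t : ℂ) * Complex.I) ?_
    intro x _ y _ hxy
    simpa using hxy
  obtain ⟨B, hB⟩ := hfin.bddAbove
  refine ⟨max B 0 + 1, by positivity, fun t ht him ↦ ?_⟩
  have hroot : R.IsRoot (t * Complex.I) := by
    have hre : 0 < ((a : ℂ) + t * Complex.I).re := by simpa using ha
    have hre' : 0 < ((a : ℂ) - t * Complex.I).re := by simpa using ha
    have hc := Complex.conj_eq_iff_im.mpr him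
    rw [map_div₀, ← Complex.Gamma_conj, ← Complex.Gamma_conj] at hc
    have e : conj ((a : ℂ) + t * Complex.I) = a - t * Complex.I := by
      simp [sub_eq_add_neg]
    rw [map_add, map_natCast, e, hgam _ hre, hgam _ hre'] at hc
    simp only [Polynomial.IsRoot, R, Polynomial.eval_sub, Polynomial.eval_comp,
      Polynomial.eval_add, Polynomial.eval_C, Polynomial.eval_X, hc, sub_self]
  have := hB hroot
  linarith [le_max_left B 0]

/-! ### Zeros of the real combination -/

/-- The case `m < l`, in which the quotient of Gamma factors is a polynomial. -/
lemma no_zero_aux {l m : ℕ} (hm : 1 ≤ m) (hml : m < l)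
    {αl αm : ℝ} (hαl : αl ≠ 0) (hαm : αm ≠ 0)
    {Fl Fm : ℂ → ℂ} (hFl : Differentiable ℂ Fl) (hFm : Differentiable ℂ Fm)
    (hFleq : ∀ s : ℂ, 1 < s.re → Fl s = latC 1 (4 * l) s)
    (hFmeq : ∀ s : ℂ, 1 < s.re → Fm s = latC 1 (4 * m) s) :
    ∃ T₀ : ℝ, 0 < T₀ ∧ ∀ t : ℝ, T₀ ≤ t →
      (αl : ℂ) * Fl (1 / 2 + t * Complex.I) + (αm : ℂ) * Fm (1 / 2 + t * Complex.I) = 0 →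
      Fl (1 / 2 + t * Complex.I) = 0 ∧ Fm (1 / 2 + t * Complex.I) = 0 := by
  have hl : 1 ≤ l := hm.trans hml.le
  obtain ⟨T, hT, hTt⟩ := gamma_quotient_not_real (a := 1 / 2 + 2 * m) (by positivity)
    (N := 2 * (l - m)) (by lia)
  refine ⟨T, hT, fun t ht h0 ↦ ?_⟩
  have him := hTt t ht
  obtain ⟨Ll, hLl⟩ := mellin_latKer_real hl t
  obtain ⟨Lm, hLm⟩ := mellin_latKer_real hm t
  have hpi : (Real.pi : ℂ) ≠ 0 := Complex.ofReal_ne_zero.mpr Real.pi_ne_zero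
  rw [continuation_eq hl hFl hFleq, continuation_eq hm hFm hFmeq, hLl, hLm] at h0 ⊢
  have e1 : (((1 / 2 + 2 * m : ℝ) : ℂ) + t * Complex.I) = 1 / 2 + t * Complex.I + 2 * m := by
    push_cast
    ring
  have e2 : (1 / 2 + t * Complex.I + 2 * l : ℂ) =
      1 / 2 + t * Complex.I + 2 * m + ((2 * (l - m) : ℕ) : ℂ) := by
    push_cast [Nat.cast_sub hml.le]
    ring
  rw [e1] at him
  rw [e2] at h0 ⊢
  have hre : 0 < (1 / 2 + t * Complex.I + 2 * m : ℂ).re := by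
    rw [← e1]
    simp
    positivity
  -- From here on `z = 1/2 + it + 2m` and `N = 2(l - m)`, so that `1/2 + it + 2l = z + N`.
  generalize (1 / 2 + t * Complex.I + 2 * m : ℂ) = z at *
  generalize 2 * (l - m) = N at *
  have hg1 : Complex.Gamma z ≠ 0 := Complex.Gamma_ne_zero_of_re_pos hre
  have hg2 : Complex.Gamma (z + N) ≠ 0 := Complex.Gamma_ne_zero_of_re_pos (by
    rw [Complex.add_re, Complex.natCast_re]; positivity)
  have hpz : (Real.pi : ℂ) ^ z ≠ 0 := by simp [Complex.cpow_eq_zero_iff, hpi]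
  rw [Complex.cpow_add _ _ hpi, Complex.cpow_natCast] at h0
  have key : ((αl * Real.pi ^ N * Ll : ℝ) : ℂ) +
      ((αm * Lm : ℝ) : ℂ) * (Complex.Gamma (z + N) / Complex.Gamma z) = 0 := by
    push_cast
    refine (mul_eq_zero.mp (?_ : (Real.pi : ℂ) ^ z * _ = 0)).resolve_left hpz
    field_simp at h0 ⊢
    linear_combination h0
  have hLm0 : Lm = 0 := by
    have h := congrArg Complex.im key
    rw [Complex.add_im, Complex.ofReal_im, Complex.im_ofReal_mul, zero_add, Complex.zero_im] at h
    simpa [him, hαm] using h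
  have hLl0 : Ll = 0 := by
    rw [hLm0, mul_zero, Complex.ofReal_zero, zero_mul, add_zero, Complex.ofReal_eq_zero] at key
    simpa [hαl, Real.pi_ne_zero] using key
  simp [hLm0, hLl0]

/-- For distinct `l, m ≥ 1` and nonzero reals `α_l, α_m`, there is `T₀ > 0` such that
for `t ≥ T₀`, if `α_l F_{4l}(1/2+it) + α_m F_{4m}(1/2+it) = 0` then both vanish. -/
theorem no_zero_of_real_combination_of_two_sums (l m : ℕ) (hl : 1 ≤ l) (hm : 1 ≤ m)
    (hlm : l ≠ m) (αl αm : ℝ) (hαl : αl ≠ 0) (hαm : αm ≠ 0)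
    (Fl Fm : ℂ → ℂ) (hFl : Differentiable ℂ Fl) (hFm : Differentiable ℂ Fm)
    (hFleq : ∀ s : ℂ, 1 < s.re → Fl s = latC 1 (4 * l) s)
    (hFmeq : ∀ s : ℂ, 1 < s.re → Fm s = latC 1 (4 * m) s) :
    ∃ T₀ : ℝ, 0 < T₀ ∧ ∀ t : ℝ, T₀ ≤ t →
      (αl : ℂ) * Fl (1 / 2 + t * Complex.I) + (αm : ℂ) * Fm (1 / 2 + t * Complex.I) = 0 →
      Fl (1 / 2 + t * Complex.I) = 0 ∧ Fm (1 / 2 + t * Complex.I) = 0 := by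
  rcases lt_or_gt_of_ne hlm with h | h
  · obtain ⟨T, hT, H⟩ := no_zero_aux hl h hαm hαl hFm hFl hFmeq hFleq
    exact ⟨T, hT, fun t ht h0 ↦ (H t ht (by rw [add_comm]; exact h0)).symm⟩
  · exact no_zero_aux hm h hαl hαm hFl hFm hFleq hFmeq
end
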